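/- arXiv:1211.4618 — 9 statements merged into one kernel-verified Lean document; each statement's English description precedes it below -/
import Mathlib

section
/- Let G be a finite simple graph on vertex set V, let A ∈ S(G), and let x be a vector with A x = 0. Suppose B ⊆ V, x vanishes on every vertex of B, v ∈ B, and w is the unique neighbor of v in G not belonging to B. Then x_w = 0. -/
/-- Color change rule for null vectors: if `A ∈ S(G)`, `A x = 0`, `x` vanishes on `B`,
`v ∈ B`, and `w` is the unique neighbor of `v` not in `B`, then `x w = 0`. -/
theorem color_change_rule_null_vector
    {V : Type*} [Fintype V] [DecidableEq V] (G : SimpleGraph V)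
    (A : Matrix V V ℂ) (hA : A.IsHermitian)
    (hpat : ∀ i j : V, i ≠ j → (A i j ≠ 0 ↔ G.Adj i j))
    (x : V → ℂ) (hx : A.mulVec x = 0)
    (B : Set V) (hB : ∀ i ∈ B, x i = 0)
    (v : V) (hv : v ∈ B) (w : V) (hw : w ∉ B) (hadj : G.Adj v w)
    (huniq : ∀ u : V, G.Adj v u → u ∉ B → u = w) :
    x w = 0 := by
  have h : ∑ u, A v u * x u = 0 := congrFun hx v
  rw [Finset.sum_eq_single w] at h
  · exact (mul_eq_zero.mp h).resolve_left ((hpat v w hadj.ne).mpr hadj)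
  · intro u _ huw
    by_cases hu : u ∈ B
    · rw [hB u hu, mul_zero]
    · have hvu : v ≠ u := fun e => hu (e ▸ hv)
      have h0 : A v u = 0 := by
        by_contra hne
        exact huw (huniq u ((hpat v u hvu).mp hne) hu)
      rw [h0, zero_mul]
  · intro hn
    exact absurd (Finset.mem_univ w) hn
end

section
/- Let G be a finite simple graph on vertex set V, let B be a zero forcing set of G, and let A ∈ S(G). If x is a vector with A x = 0 and x vanishes on every vertex of B, then x = 0. -/
/-- One step of the zero forcing color change rule: `B'` is obtained from `B` by adding
a vertex `w` which is the unique neighbor outside `B` of some vertex `v ∈ B`. -/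
def ZFStep {V : Type*} [DecidableEq V] (G : SimpleGraph V) (B B' : Finset V) : Prop :=
  ∃ v ∈ B, ∃ w : V, w ∉ B ∧ G.Adj v w ∧ (∀ u : V, G.Adj v u → u ∉ B → u = w) ∧
    B' = insert w B

/-- `B` is a zero forcing set of `G` if repeated application of the color change rule
starting from `B` colors all vertices black. -/
def IsZeroForcingSet {V : Type*} [Fintype V] [DecidableEq V]
    (G : SimpleGraph V) (B : Finset V) : Prop :=
  Relation.ReflTransGen (ZFStep G) B Finset.univ

/-- If `B` is a zero forcing set of `G`, `A ∈ S(G)`, `A x = 0`, and `x` vanishes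
on `B`, then `x = 0`. -/
theorem null_vector_vanishing_on_zero_forcing_set_eq_zero
    {V : Type*} [Fintype V] [DecidableEq V] (G : SimpleGraph V)
    (B : Finset V) (hB : IsZeroForcingSet G B)
    (A : Matrix V V ℂ) (hA : A.IsHermitian)
    (hpat : ∀ i j : V, i ≠ j → (A i j ≠ 0 ↔ G.Adj i j))
    (x : V → ℂ) (hx : A.mulVec x = 0) (hxB : ∀ i ∈ B, x i = 0) :
    x = 0 := by
  have key : ∀ C : Finset V, Relation.ReflTransGen (ZFStep G) B C → ∀ i ∈ C, x i = 0 := by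
    intro C hC
    induction hC with
    | refl => exact hxB
    | tail _ hstep ih =>
      obtain ⟨v, hv, w, hw, hvw, huniq, rfl⟩ := hstep
      intro i hi
      rcases Finset.mem_insert.1 hi with rfl | hi
      · have h := congrFun hx v
        simp only [Matrix.mulVec, dotProduct, Pi.zero_apply] at h
        rw [Finset.sum_eq_single i] at h
        · exact (mul_eq_zero.1 h).resolve_left ((hpat v i hvw.ne).2 hvw)
        · intro u _ hui
          by_cases hu : x u = 0
          · rw [hu, mul_zero]
          · have huB := fun hm => hu (ih u hm)
            have hne : v ≠ u := fun e => huB (e ▸ hv)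
            have hA0 : A v u = 0 := by
              by_contra hne0
              exact hui (huniq u ((hpat v u hne).1 hne0) huB)
            rw [hA0, zero_mul]
        · intro hmem
          exact absurd (Finset.mem_univ i) hmem
      · exact ih i hi
  funext i
  exact key Finset.univ hB i (Finset.mem_univ i)
end

section
/- Let G be a finite simple graph on vertex set V and let B be a zero forcing set of G. Then for every A ∈ S(G), the nullity of A is at most the cardinality of B. -/
theorem zf_vanish {V : Type*} [Fintype V] [DecidableEq V] (G : SimpleGraph V)
    (A : Matrix V V ℂ)
    (hpat : ∀ i j : V, i ≠ j → (A i j ≠ 0 ↔ G.Adj i j))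
    (x : V → ℂ) (hx : A.mulVec x = 0) (B C : Finset V)
    (h : Relation.ReflTransGen (ZFStep G) B C) (hB : ∀ b ∈ B, x b = 0) :
    ∀ c ∈ C, x c = 0 := by
  induction h with
  | refl => exact hB
  | @tail D _ _ hstep ih =>
    obtain ⟨v, hv, w, hw, hadj, huniq, rfl⟩ := hstep
    intro c hc
    rcases Finset.mem_insert.mp hc with rfl | hc
    · have h1 : ∑ j, A v j * x j = 0 := congrFun hx v
      rw [Finset.sum_eq_single c] at h1
      · exact (mul_eq_zero.mp h1).resolve_left ((hpat v c hadj.ne).mpr hadj)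
      · intro u _ huc
        by_cases hu : u ∈ D
        · rw [ih u hu, mul_zero]
        · have hne : v ≠ u := fun e => hu (e ▸ hv)
          have : A v u = 0 := by
            by_contra h0
            exact huc (huniq u ((hpat v u hne).mp h0) hu)
          rw [this, zero_mul]
      · intro h; exact absurd (Finset.mem_univ c) h
    · exact ih c hc

/-- If `B` is a zero forcing set of `G` then the nullity of any `A ∈ S(G)` is at most
the cardinality of `B`. -/
theorem nullity_le_card_zero_forcing_set
    {V : Type*} [Fintype V] [DecidableEq V] (G : SimpleGraph V)
    (B : Finset V) (hB : IsZeroForcingSet G B)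
    (A : Matrix V V ℂ) (hA : A.IsHermitian)
    (hpat : ∀ i j : V, i ≠ j → (A i j ≠ 0 ↔ G.Adj i j)) :
    Module.finrank ℂ (LinearMap.ker A.mulVecLin) ≤ B.card := by
  let f : LinearMap.ker A.mulVecLin →ₗ[ℂ] (B → ℂ) :=
    (LinearMap.funLeft ℂ ℂ (Subtype.val : B → V)).comp (LinearMap.ker A.mulVecLin).subtype
  have hf : Function.Injective f := by
    rw [injective_iff_map_eq_zero]
    intro x hx0
    apply Subtype.ext
    funext c
    have hx : A.mulVec x.1 = 0 := LinearMap.mem_ker.mp x.2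
    exact zf_vanish G A hpat x.1 hx B Finset.univ hB
      (fun b hb => congrFun hx0 ⟨b, hb⟩) c (Finset.mem_univ c)
  simpa using LinearMap.finrank_le_finrank_of_injective hf
end

section
/- Let A be an n×n Hermitian complex matrix with p positive eigenvalues and q negative eigenvalues, counted with multiplicity, and let R be an isotropic subspace of A with dim R > min(p, q). Then R contains a nonzero vector x with A x = 0. -/
open scoped Matrix

/-- The number of positive eigenvalues (with multiplicity) of a Hermitian matrix. -/
noncomputable def posEigCount {n : Type*} [Fintype n] [DecidableEq n]
    {A : Matrix n n ℂ} (hA : A.IsHermitian) : ℕ :=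
  Fintype.card {i // 0 < hA.eigenvalues i}

/-- The number of negative eigenvalues (with multiplicity) of a Hermitian matrix. -/
noncomputable def negEigCount {n : Type*} [Fintype n] [DecidableEq n]
    {A : Matrix n n ℂ} (hA : A.IsHermitian) : ℕ :=
  Fintype.card {i // hA.eigenvalues i < 0}

/-- Key step: if the eigenvalues outside `P` all have the same weak sign `s`, and
`dim R > #P`, then `R` contains a nonzero null vector. -/
theorem null_vector_aux
    (n : ℕ) (A : Matrix (Fin n) (Fin n) ℂ) (hA : A.IsHermitian)
    (R : Submodule ℂ (Fin n → ℂ))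
    (hR : ∀ x ∈ R, star x ⬝ᵥ A.mulVec x = 0)
    (P : Fin n → Prop) [DecidablePred P] (s : ℝ) (hs : s ≠ 0)
    (hP : ∀ i, ¬ P i → 0 ≤ s * hA.eigenvalues i)
    (hdim : Fintype.card {i // P i} < Module.finrank ℂ R) :
    ∃ x ∈ R, x ≠ 0 ∧ A.mulVec x = 0 := by
  obtain ⟨U, hU⟩ : ∃ U : Matrix (Fin n) (Fin n) ℂ,
      A = U * Matrix.diagonal (fun i => (hA.eigenvalues i : ℂ)) * Uᴴ := by
    refine ⟨hA.eigenvectorUnitary, ?_⟩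
    have h := hA.spectral_theorem
    rw [Unitary.conjStarAlgAut_apply] at h
    exact h
  let L : R →ₗ[ℂ] ({i // P i} → ℂ) :=
    (LinearMap.funLeft ℂ ℂ (Subtype.val : {i // P i} → Fin n)) ∘ₗ (Uᴴ).mulVecLin ∘ₗ R.subtype
  have hker : LinearMap.ker L ≠ ⊥ :=
    LinearMap.ker_ne_bot_of_finrank_lt (by simpa using hdim)
  obtain ⟨x, hxk, hx0⟩ := Submodule.exists_mem_ne_zero_of_ne_bot hker
  refine ⟨x, x.2, by simpa using hx0, ?_⟩
  obtain ⟨y, hy⟩ : ∃ y, y = Uᴴ *ᵥ (x : Fin n → ℂ) := ⟨_, rfl⟩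
  have hyP : ∀ i, P i → y i = 0 := by
    intro i hi
    have := congrFun (LinearMap.mem_ker.1 hxk) ⟨i, hi⟩
    rw [hy]
    exact this
  have hAx : A *ᵥ (x : Fin n → ℂ) =
      U *ᵥ (Matrix.diagonal (fun i => (hA.eigenvalues i : ℂ)) *ᵥ y) := by
    rw [hy, Matrix.mulVec_mulVec, Matrix.mulVec_mulVec, ← hU]
  have hq := hR x x.2
  have hstar : star (x : Fin n → ℂ) ᵥ* U = star y := by
    rw [hy, Matrix.star_mulVec, Matrix.conjTranspose_conjTranspose]
  rw [hAx, Matrix.dotProduct_mulVec, hstar] at hq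
  have hsum : ∑ i, s * hA.eigenvalues i * Complex.normSq (y i) = 0 := by
    have h2 : ((∑ i, s * hA.eigenvalues i * Complex.normSq (y i) : ℝ) : ℂ) = s * 0 := by
      rw [← hq]
      simp only [dotProduct, Matrix.mulVec_diagonal, Finset.mul_sum, Pi.star_apply]
      push_cast
      refine Finset.sum_congr rfl fun i _ => ?_
      rw [Complex.normSq_eq_conj_mul_self]
      simp only [Complex.star_def]
      ring
    rw [mul_zero] at h2
    exact_mod_cast h2
  have hz := (Finset.sum_eq_zero_iff_of_nonneg (fun i _ => by
    by_cases hi : P i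
    · simp [hyP i hi]
    · exact mul_nonneg (hP i hi) (Complex.normSq_nonneg _))).1 hsum
  have hD : Matrix.diagonal (fun i => (hA.eigenvalues i : ℂ)) *ᵥ y = 0 := by
    ext i
    have := hz i (Finset.mem_univ i)
    simpa [Matrix.mulVec_diagonal, hs] using this
  rw [hAx, hD, Matrix.mulVec_zero]

/-- If `R` is an isotropic subspace of a Hermitian matrix `A` with `p` positive and
`q` negative eigenvalues, and `dim R > min p q`, then `R` contains a nonzero null
vector of `A`. -/
theorem isotropic_subspace_contains_null_vector
    (n : ℕ) (A : Matrix (Fin n) (Fin n) ℂ) (hA : A.IsHermitian)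
    (p q : ℕ) (hp : posEigCount hA = p) (hq : negEigCount hA = q)
    (R : Submodule ℂ (Fin n → ℂ))
    (hR : ∀ x ∈ R, star x ⬝ᵥ A.mulVec x = 0)
    (hdim : min p q < Module.finrank ℂ R) :
    ∃ x ∈ R, x ≠ 0 ∧ A.mulVec x = 0 := by
  subst hp hq
  rcases min_lt_iff.1 hdim with h | h
  · exact null_vector_aux n A hA R hR (fun i => 0 < hA.eigenvalues i) (-1) (by norm_num)
      (fun i hi => by linarith [not_lt.1 hi]) h
  · exact null_vector_aux n A hA R hR (fun i => hA.eigenvalues i < 0) 1 (by norm_num)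
      (fun i hi => by linarith [not_lt.1 hi]) h
end

section
/- Let A be a Hermitian complex matrix with rows and columns indexed by a finite set V, let x be a vector with A x = 0, and let W_1, …, W_k be pairwise disjoint subsets of V such that the support of x is contained in W_1 ∪ ⋯ ∪ W_k and A u v = 0 whenever u ∈ W_i, v ∈ W_j, and i ≠ j. For each i let x̂_i be the vector agreeing with x on W_i and equal to 0 elsewhere. Then every vector y in the span of x̂_1, …, x̂_k satisfies yᕽ A y = 0; that is, the span of x̂_1, …, x̂_k is an isotropic subspace of A. -/
open scoped Matrix

/-- If `A x = 0` for a Hermitian matrix `A`, and `W₁, …, W_k` are pairwise disjoint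
sets of indices containing the support of `x` with no nonzero entries of `A` between
distinct `W_i`'s, then the span of the restrictions `x̂_i` of `x` to the `W_i` is an
isotropic subspace of `A`. -/
theorem span_of_component_restrictions_isotropic
    {V : Type*} [Fintype V] [DecidableEq V]
    (A : Matrix V V ℂ) (hA : A.IsHermitian)
    (x : V → ℂ) (hx : A.mulVec x = 0)
    (k : ℕ) (W : Fin k → Finset V)
    (hdisj : ∀ i j : Fin k, i ≠ j → Disjoint (W i) (W j))
    (hsupp : ∀ u : V, x u ≠ 0 → ∃ i : Fin k, u ∈ W i)
    (hblock : ∀ i j : Fin k, i ≠ j → ∀ u ∈ W i, ∀ v ∈ W j, A u v = 0)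
    (xhat : Fin k → V → ℂ)
    (hxhat : ∀ i : Fin k, ∀ u : V, xhat i u = if u ∈ W i then x u else 0) :
    ∀ y ∈ Submodule.span ℂ (Set.range xhat), star y ⬝ᵥ A.mulVec y = 0 := by
  have key : ∀ y ∈ Submodule.span ℂ (Set.range xhat),
      (∀ u, (∀ i, u ∉ W i) → y u = 0) ∧ (∀ i, ∀ u ∈ W i, A.mulVec y u = 0) := by
    intro y hy
    induction hy using Submodule.span_induction with
    | mem y h =>
      obtain ⟨i, rfl⟩ := h
      refine ⟨fun u hu => by simp [hxhat, hu i], fun j u hu => ?_⟩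
      by_cases hij : j = i
      · subst hij
        rw [← show A.mulVec x u = 0 from congrFun hx u]
        simp only [Matrix.mulVec, dotProduct]
        refine Finset.sum_congr rfl fun v _ => ?_
        rw [hxhat]
        split_ifs with hv
        · rfl
        · by_cases h0 : x v = 0
          · simp [h0]
          · obtain ⟨l, hl⟩ := hsupp v h0
            have hne : j ≠ l := by
              rintro rfl
              exact hv hl
            simp [hblock j l hne u hu v hl]
      · simp only [Matrix.mulVec, dotProduct]
        refine Finset.sum_eq_zero fun v _ => ?_
        rw [hxhat]
        split_ifs with hv
        · simp [hblock j i hij u hu v hv]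
        · simp
    | zero => simp
    | add a b _ _ ha hb =>
      refine ⟨fun u hu => by simp [ha.1 u hu, hb.1 u hu], fun i u hu => ?_⟩
      simp [Matrix.mulVec_add, ha.2 i u hu, hb.2 i u hu]
    | smul c a _ ha =>
      refine ⟨fun u hu => by simp [ha.1 u hu], fun i u hu => ?_⟩
      simp [Matrix.mulVec_smul, ha.2 i u hu]
  intro y hy
  obtain ⟨h1, h2⟩ := key y hy
  refine Finset.sum_eq_zero fun u _ => ?_
  by_cases h : ∃ i, u ∈ W i
  · obtain ⟨i, hi⟩ := h
    rw [h2 i u hi, mul_zero]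
  · push Not at h
    simp [h1 u h]
end

section
/- Let A be a positive semidefinite Hermitian complex matrix with rows and columns indexed by a finite set V, let x be a vector with A x = 0, and let W ⊆ V be such that A u v = 0 for every u ∈ W and every v ∉ W with x_v ≠ 0. Let x̂ be the vector agreeing with x on W and equal to 0 elsewhere. Then A x̂ = 0. -/
open scoped ComplexOrder

/-- Let `A` be positive semidefinite with `A x = 0`, and let `W` be a set of indices
such that `A u v = 0` whenever `u ∈ W`, `v ∉ W`, and `x v ≠ 0`. Then the restriction
`x̂` of `x` to `W` also satisfies `A x̂ = 0`. -/
theorem psd_null_vector_restriction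
    {V : Type*} [Fintype V] [DecidableEq V]
    (A : Matrix V V ℂ) (hA : A.PosSemidef)
    (x : V → ℂ) (hx : A.mulVec x = 0)
    (W : Finset V)
    (hW : ∀ u ∈ W, ∀ v : V, v ∉ W → x v ≠ 0 → A u v = 0)
    (xhat : V → ℂ) (hxhat : ∀ u : V, xhat u = if u ∈ W then x u else 0) :
    A.mulVec xhat = 0 := by
  rw [← hA.dotProduct_mulVec_zero_iff]
  refine Finset.sum_eq_zero fun u _ => ?_
  by_cases hu : u ∈ W
  · have h : A.mulVec xhat u = A.mulVec x u := by
      refine Finset.sum_congr rfl fun v _ => ?_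
      by_cases hv : v ∈ W
      · simp [hxhat, hv]
      · by_cases h0 : x v = 0
        · simp [hxhat, hv, h0]
        · simp [hW u hu v hv h0]
    rw [h, hx]
    simp
  · simp [hxhat, hu]
end

section
/- Let G be a finite simple graph on vertex set V, let A ∈ S(G) be positive semidefinite, and let x be a vector with A x = 0 that vanishes on a set B ⊆ V. Suppose v ∈ B, w ∉ B, W is the vertex set of the connected component containing w in the induced subgraph of G on V ∖ B, and w is the unique neighbor of v lying in W. Then x_w = 0. -/
open scoped ComplexOrder

/-- Positive semidefinite color change rule for null vectors: if `A ∈ S(G)` is positive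
semidefinite, `A x = 0`, `x` vanishes on `B`, `v ∈ B`, `w ∉ B`, and `w` is the unique
neighbor of `v` lying in the connected component of `w` in the induced subgraph of `G`
on the complement of `B`, then `x w = 0`. -/
theorem psd_color_change_rule_null_vector
    {V : Type*} [Fintype V] [DecidableEq V] (G : SimpleGraph V)
    (A : Matrix V V ℂ) (hA : A.PosSemidef)
    (hpat : ∀ i j : V, i ≠ j → (A i j ≠ 0 ↔ G.Adj i j))
    (x : V → ℂ) (hx : A.mulVec x = 0)
    (B : Set V) (hxB : ∀ i ∈ B, x i = 0)
    (v : V) (hv : v ∈ B) (w : V) (hw : w ∉ B) (hadj : G.Adj v w)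
    (huniq : ∀ u : V, G.Adj v u → ∀ hu : u ∉ B,
      (G.induce {a : V | a ∉ B}).Reachable ⟨u, hu⟩ ⟨w, hw⟩ → u = w) :
    x w = 0 := by
  classical
  set P : V → Prop := fun u => ∃ hu : u ∉ B,
    (G.induce {a : V | a ∉ B}).Reachable ⟨u, hu⟩ ⟨w, hw⟩ with hP
  set y : V → ℂ := fun u => if P u then x u else 0 with hy
  have hPw : P w := ⟨hw, SimpleGraph.Reachable.refl _⟩
  have key : ∀ i, P i → A.mulVec y i = 0 := by
    intro i hi
    refine Eq.trans ?_ (congrFun hx i)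
    simp only [Matrix.mulVec, dotProduct]
    refine Finset.sum_congr rfl fun j _ => ?_
    by_cases hj : P j
    · simp [hy, hj]
    · have hyj : y j = 0 := by simp [hy, hj]
      rw [hyj, mul_zero]
      by_cases hjB : j ∈ B
      · rw [hxB j hjB, mul_zero]
      · have hne : i ≠ j := fun h => hj (h ▸ hi)
        have h0 : A i j = 0 := by
          by_contra h
          have hij := (hpat i j hne).1 h
          obtain ⟨hiB, hr⟩ := hi
          have hji : (G.induce {a : V | a ∉ B}).Adj ⟨j, hjB⟩ ⟨i, hiB⟩ := hij.symm
          exact hj ⟨hjB, hji.reachable.trans hr⟩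
        rw [h0, zero_mul]
  have hq : star y ⬝ᵥ A.mulVec y = 0 := by
    refine Finset.sum_eq_zero fun i _ => ?_
    by_cases hi : P i
    · rw [key i hi, mul_zero]
    · simp [hy, hi]
  have hAy := (hA.dotProduct_mulVec_zero_iff y).1 hq
  have h1 := congrFun hAy v
  simp only [Matrix.mulVec, dotProduct] at h1
  rw [Finset.sum_eq_single w] at h1
  · have hyw : y w = x w := by simp [hy, hPw]
    rw [hyw] at h1
    exact (mul_eq_zero.1 h1).resolve_left ((hpat v w hadj.ne).2 hadj)
  · intro j _ hjw
    by_cases hj : P j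
    · obtain ⟨hjB, hr⟩ := hj
      have hne : v ≠ j := fun h => hjB (h ▸ hv)
      have h0 : A v j = 0 := by
        by_contra h
        exact hjw (huniq j ((hpat v j hne).1 h) hjB hr)
      rw [h0, zero_mul]
    · simp [hy, hj]
  · simp
end

section
/- Let G be a finite simple graph on vertex set V and let B be a positive semidefinite zero forcing set of G. Then for every positive semidefinite A ∈ S(G), the nullity of A is at most the cardinality of B. -/
open scoped ComplexOrder

/-- One step of the positive semidefinite color change rule: `B'` is obtained from `B`
by adding a vertex `w ∉ B` which is the unique neighbor of some `v ∈ B` lying in the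
connected component of `w` in the induced subgraph of `G` on the complement of `B`. -/
def PSDZFStep {V : Type*} [DecidableEq V] (G : SimpleGraph V) (B B' : Finset V) : Prop :=
  ∃ v ∈ B, ∃ w : V, ∃ hw : w ∉ B, G.Adj v w ∧
    (∀ u : V, G.Adj v u → ∀ hu : u ∉ B,
      (G.induce {a : V | a ∉ B}).Reachable ⟨u, hu⟩ ⟨w, hw⟩ → u = w) ∧
    B' = insert w B

/-- `B` is a positive semidefinite zero forcing set of `G` if repeated application of
the positive semidefinite color change rule starting from `B` colors all vertices
black. -/
def IsPSDZeroForcingSet {V : Type*} [Fintype V] [DecidableEq V]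
    (G : SimpleGraph V) (B : Finset V) : Prop :=
  Relation.ReflTransGen (PSDZFStep G) B Finset.univ

/-- A kernel vector vanishing on `B` also vanishes on the vertex forced from `B`. -/
theorem psdzf_step_vanish
    {V : Type*} [Fintype V] [DecidableEq V] (G : SimpleGraph V)
    (A : Matrix V V ℂ) (hA : A.PosSemidef)
    (hpat : ∀ i j : V, i ≠ j → (A i j ≠ 0 ↔ G.Adj i j))
    (B B' : Finset V) (h : PSDZFStep G B B') (x : V → ℂ)
    (hx : A.mulVec x = 0) (hxB : ∀ i ∈ B, x i = 0) : ∀ i ∈ B', x i = 0 := by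
  classical
  obtain ⟨v, hv, w, hw, hvw, huniq, rfl⟩ := h
  let C : V → Prop := fun u => ∃ hu : u ∉ B,
    (G.induce {a : V | a ∉ B}).Reachable ⟨u, hu⟩ ⟨w, hw⟩
  have hCw : C w := ⟨hw, SimpleGraph.Reachable.refl _⟩
  let y : V → ℂ := fun u => if C u then x u else 0
  have hrow : ∀ i, C i → A.mulVec y i = 0 := by
    intro i hi
    have hxi : A.mulVec x i = 0 := by rw [hx]; rfl
    rw [← hxi]
    unfold Matrix.mulVec dotProduct
    refine Finset.sum_congr rfl fun j _ => ?_
    by_cases hj : C j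
    · simp [y, hj]
    · by_cases hjB : j ∈ B
      · simp [y, hj, hxB j hjB]
      · have hij : i ≠ j := by rintro rfl; exact hj hi
        have hA0 : A i j = 0 := by
          by_contra hne
          have hadj := (hpat i j hij).1 hne
          obtain ⟨hiB, hr⟩ := hi
          apply hj
          refine ⟨hjB, SimpleGraph.Reachable.trans (SimpleGraph.Adj.reachable ?_) hr⟩
          simpa using hadj.symm
        simp [hA0]
  have hq : dotProduct (star y) (A.mulVec y) = 0 := by
    unfold dotProduct
    refine Finset.sum_eq_zero fun i _ => ?_
    by_cases hi : C i
    · rw [hrow i hi, mul_zero]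
    · simp [y, hi]
  have hAy : A.mulVec y = 0 := (hA.dotProduct_mulVec_zero_iff y).1 hq
  have hvy : A.mulVec y v = A v w * x w := by
    unfold Matrix.mulVec dotProduct
    rw [Finset.sum_eq_single w]
    · simp [y, hCw]
    · intro u _ huw
      by_cases hu : C u
      · obtain ⟨huB, hr⟩ := hu
        have hvu : v ≠ u := by rintro rfl; exact huB hv
        have : A v u = 0 := by
          by_contra hne
          exact huw (huniq u ((hpat v u hvu).1 hne) huB hr)
        simp [this]
      · simp [y, hu]
    · simp
  have hne : A v w ≠ 0 := (hpat v w hvw.ne).2 hvw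
  have hxw : x w = 0 := by
    rw [hAy] at hvy
    exact (mul_eq_zero.1 hvy.symm).resolve_left hne
  intro i hi
  rcases Finset.mem_insert.1 hi with rfl | hi
  · exact hxw
  · exact hxB i hi

/-- If `B` is a positive semidefinite zero forcing set of `G` then the nullity of any
positive semidefinite `A ∈ S(G)` is at most the cardinality of `B`. -/
theorem nullity_le_card_psd_zero_forcing_set
    {V : Type*} [Fintype V] [DecidableEq V] (G : SimpleGraph V)
    (B : Finset V) (hB : IsPSDZeroForcingSet G B)
    (A : Matrix V V ℂ) (hA : A.PosSemidef)
    (hpat : ∀ i j : V, i ≠ j → (A i j ≠ 0 ↔ G.Adj i j)) :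
    Module.finrank ℂ (LinearMap.ker A.mulVecLin) ≤ B.card := by
  have key : ∀ x : V → ℂ, A.mulVec x = 0 → (∀ i ∈ B, x i = 0) → x = 0 := by
    unfold IsPSDZeroForcingSet at hB
    induction hB using Relation.ReflTransGen.head_induction_on with
    | refl => exact fun x _ h => funext fun i => h i (Finset.mem_univ i)
    | head h _ ih =>
      exact fun x hx hxB => ih x hx (psdzf_step_vanish G A hA hpat _ _ h x hx hxB)
  let f : LinearMap.ker A.mulVecLin →ₗ[ℂ] (B → ℂ) :=
    (LinearMap.funLeft ℂ ℂ (Subtype.val : B → V)).comp (LinearMap.ker A.mulVecLin).subtype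
  have hf : Function.Injective f := by
    rw [injective_iff_map_eq_zero]
    rintro ⟨x, hx⟩ h
    refine Subtype.ext (key x (by simpa using hx) fun i hi => ?_)
    exact congrFun h ⟨i, hi⟩
  simpa using LinearMap.finrank_le_finrank_of_injective hf
end

section
/- (Northeast Lemma) Let G be a finite simple graph on n vertices and suppose there exists A ∈ S(G) with exactly p positive eigenvalues and exactly q negative eigenvalues (counted with multiplicity). Then for all nonnegative integers s and t with (p + s) + (q + t) ≤ n, there exists A' ∈ S(G) with exactly p + s positive eigenvalues and exactly q + t negative eigenvalues. -/
open Matrix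

/-- The Hermitian form of a matrix. -/
noncomputable def hform {V : Type*} [Fintype V] (A : Matrix V V ℂ) (x : V → ℂ) : ℝ :=
  (star x ⬝ᵥ A *ᵥ x).re

lemma exists_diag {V : Type*} [Fintype V] [DecidableEq V] {A : Matrix V V ℂ}
    (hA : A.IsHermitian) : ∃ E : (V → ℂ) ≃ₗ[ℂ] (V → ℂ),
      ∀ x, hform A x = ∑ i, hA.eigenvalues i * ‖E x i‖ ^ 2 := by
  set U : Matrix V V ℂ := (hA.eigenvectorUnitary : Matrix V V ℂ) with hU
  have h1 : U * star U = 1 := Unitary.mul_star_self_of_mem hA.eigenvectorUnitary.2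
  have h2 : star U * U = 1 := Unitary.star_mul_self_of_mem hA.eigenvectorUnitary.2
  refine ⟨LinearEquiv.ofLinearMap (Matrix.mulVecLin (star U)) (Matrix.mulVecLin U) ?_ ?_, ?_⟩
  · rw [← Matrix.mulVecLin_mul, h2, Matrix.mulVecLin_one]
  · rw [← Matrix.mulVecLin_mul, h1, Matrix.mulVecLin_one]
  · intro x
    have hs : A = U * diagonal (fun i => (hA.eigenvalues i : ℂ)) * star U := by
      conv_lhs => rw [hA.spectral_theorem]
      rfl
    have key : star x ⬝ᵥ A *ᵥ x = star (star U *ᵥ x) ⬝ᵥ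
        (diagonal (fun i => (hA.eigenvalues i : ℂ)) *ᵥ (star U *ᵥ x)) := by
      conv_lhs => rw [hs]
      rw [star_mulVec, ← dotProduct_mulVec, Matrix.mulVec_mulVec, Matrix.mulVec_mulVec,
        Matrix.star_eq_conjTranspose, Matrix.conjTranspose_conjTranspose, Matrix.mul_assoc]
    rw [hform, key]
    simp only [dotProduct, mulVec_diagonal, Complex.re_sum, LinearEquiv.coe_ofLinearMap,
      Matrix.mulVecLin_apply]
    refine Finset.sum_congr rfl fun i _ => ?_
    generalize (star U *ᵥ x) = y
    simp only [Pi.star_apply, RCLike.star_def]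
    rw [mul_left_comm, ← Complex.normSq_eq_conj_mul_self, Complex.normSq_eq_norm_sq]
    norm_cast

lemma finrank_le_of_pos {V : Type*} [Fintype V] (E : (V → ℂ) ≃ₗ[ℂ] (V → ℂ)) (f : V → ℝ)
    [Fintype {i // 0 < f i}]
    (W : Submodule ℂ (V → ℂ)) (hW : ∀ x ∈ W, x ≠ 0 → 0 < ∑ i, f i * ‖E x i‖ ^ 2) :
    Module.finrank ℂ W ≤ Fintype.card {i // 0 < f i} := by
  let L : W →ₗ[ℂ] ({i // 0 < f i} → ℂ) :=
    (LinearMap.funLeft ℂ ℂ (Subtype.val : {i // 0 < f i} → V)) ∘ₗ E.toLinearMap ∘ₗ W.subtype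
  have hL : Function.Injective L := by
    rw [← LinearMap.ker_eq_bot, LinearMap.ker_eq_bot']
    rintro ⟨x, hx⟩ h
    by_contra hne
    have hne' : x ≠ 0 := fun h => hne (by simp [h])
    refine absurd (hW x hx hne') (not_lt.mpr (Finset.sum_nonpos fun i _ => ?_))
    by_cases hi : 0 < f i
    · have : E x i = 0 := congrFun h ⟨i, hi⟩
      simp [this]
    · exact mul_nonpos_of_nonpos_of_nonneg (not_lt.mp hi) (by positivity)
  simpa using LinearMap.finrank_le_finrank_of_injective hL

lemma exists_pos_space {V : Type*} [Fintype V] (E : (V → ℂ) ≃ₗ[ℂ] (V → ℂ)) (f : V → ℝ)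
    [Fintype {i // 0 < f i}] :
    ∃ W : Submodule ℂ (V → ℂ), Module.finrank ℂ W = Fintype.card {i // 0 < f i} ∧
      ∀ x ∈ W, x ≠ 0 → 0 < ∑ i, f i * ‖E x i‖ ^ 2 := by
  let L : ({i // 0 < f i} → ℂ) →ₗ[ℂ] (V → ℂ) :=
    E.symm.toLinearMap ∘ₗ
      (Function.ExtendByZero.linearMap ℂ (Subtype.val : {i // 0 < f i} → V))
  have hext : ∀ y : {i // 0 < f i} → ℂ, ∀ i, E (L y) i = Function.extend Subtype.val y 0 i := by
    intro y i
    simp [L]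
  have hinj : Function.Injective L := by
    intro y z h
    funext i
    have h1 := hext y i
    have h2 := hext z i
    rw [Subtype.val_injective.extend_apply] at h1 h2
    rw [← h1, ← h2, h]
  refine ⟨LinearMap.range L, ?_, ?_⟩
  · rw [LinearMap.finrank_range_of_inj hinj]; simp
  · rintro _ ⟨y, rfl⟩ hne
    have hy : y ≠ 0 := fun h => hne (by simp [h])
    obtain ⟨j, hj⟩ := Function.ne_iff.mp hy
    refine Finset.sum_pos' (fun i _ => ?_) ⟨j, Finset.mem_univ _, ?_⟩
    · rw [hext]
      by_cases hi : 0 < f i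
      · positivity
      · rw [Function.extend_apply']
        · simp
        · rintro ⟨a, rfl⟩; exact hi a.2
    · rw [hext, Subtype.val_injective.extend_apply]
      have := j.2
      have : 0 < ‖y j‖ := norm_pos_iff.mpr hj
      positivity

section counts
variable {V : Type*} [Fintype V] [DecidableEq V] {A : Matrix V V ℂ} (hA : A.IsHermitian)

lemma le_posEigCount (W : Submodule ℂ (V → ℂ)) (hW : ∀ x ∈ W, x ≠ 0 → 0 < hform A x) :
    Module.finrank ℂ W ≤ posEigCount hA := by
  obtain ⟨E, hE⟩ := exists_diag hA
  exact finrank_le_of_pos E _ W fun x hx h => hE x ▸ hW x hx h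

lemma exists_posEigCount : ∃ W : Submodule ℂ (V → ℂ), Module.finrank ℂ W = posEigCount hA ∧
    ∀ x ∈ W, x ≠ 0 → 0 < hform A x := by
  obtain ⟨E, hE⟩ := exists_diag hA
  simp only [hE]
  exact exists_pos_space E _

lemma negEigCount_eq : negEigCount hA = Fintype.card {i // 0 < -hA.eigenvalues i} := by
  rw [negEigCount]
  exact Fintype.card_congr (Equiv.subtypeEquivRight fun i => by simp)

lemma le_negEigCount (W : Submodule ℂ (V → ℂ)) (hW : ∀ x ∈ W, x ≠ 0 → hform A x < 0) :
    Module.finrank ℂ W ≤ negEigCount hA := by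
  obtain ⟨E, hE⟩ := exists_diag hA
  rw [negEigCount_eq]
  refine finrank_le_of_pos E (fun i => -hA.eigenvalues i) W fun x hx h => ?_
  have := hW x hx h
  rw [hE] at this
  simpa using this

lemma exists_negEigCount : ∃ W : Submodule ℂ (V → ℂ), Module.finrank ℂ W = negEigCount hA ∧
    ∀ x ∈ W, x ≠ 0 → hform A x < 0 := by
  obtain ⟨E, hE⟩ := exists_diag hA
  obtain ⟨W, h1, h2⟩ := exists_pos_space E (fun i => -hA.eigenvalues i)
  refine ⟨W, by rw [negEigCount_eq, h1], fun x hx h => ?_⟩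
  have := h2 x hx h
  rw [hE]
  simpa using this

lemma hform_neg (x : V → ℂ) : hform (-A) x = - hform A x := by
  simp [hform, Matrix.neg_mulVec]

lemma posEigCount_neg (hA' : (-A).IsHermitian) : posEigCount hA' = negEigCount hA := by
  apply le_antisymm
  · obtain ⟨W, h1, h2⟩ := exists_posEigCount hA'
    rw [← h1]
    exact le_negEigCount hA W fun x hx h => by have := h2 x hx h; rw [hform_neg] at this; linarith
  · obtain ⟨W, h1, h2⟩ := exists_negEigCount hA
    rw [← h1]
    exact le_posEigCount hA' W fun x hx h => by have := h2 x hx h; rw [hform_neg]; linarith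

lemma negEigCount_neg (hA' : (-A).IsHermitian) : negEigCount hA' = posEigCount hA := by
  apply le_antisymm
  · obtain ⟨W, h1, h2⟩ := exists_negEigCount hA'
    rw [← h1]
    exact le_posEigCount hA W fun x hx h => by have := h2 x hx h; rw [hform_neg] at this; linarith
  · obtain ⟨W, h1, h2⟩ := exists_posEigCount hA
    rw [← h1]
    exact le_negEigCount hA' W fun x hx h => by have := h2 x hx h; rw [hform_neg]; linarith

lemma pos_add_neg : posEigCount hA + negEigCount hA = A.rank := by
  rw [hA.rank_eq_card_non_zero_eigs, posEigCount, negEigCount]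
  rw [Fintype.card_subtype, Fintype.card_subtype, Fintype.card_subtype,
    ← Finset.card_union_of_disjoint]
  · congr 1
    ext i
    simp only [Finset.mem_union, Finset.mem_filter, Finset.mem_univ, true_and]
    rw [or_comm]
    exact lt_or_lt_iff_ne
  · rw [Finset.disjoint_filter]
    intro i _ h
    exact not_lt.mpr h.le

lemma step_counts (hlt : posEigCount hA + negEigCount hA < Fintype.card V) :
    ∃ (k : V) (hA' : (A + Matrix.single k k 1).IsHermitian),
      posEigCount hA' = posEigCount hA + 1 ∧ negEigCount hA' = negEigCount hA := by
  rw [pos_add_neg] at hlt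
  have hrn : A.rank + Module.finrank ℂ (LinearMap.ker A.mulVecLin) = Fintype.card V := by
    have := LinearMap.finrank_range_add_finrank_ker A.mulVecLin
    simpa [Matrix.rank] using this
  have hker : LinearMap.ker A.mulVecLin ≠ ⊥ := by
    intro h
    rw [h, finrank_bot] at hrn
    omega
  obtain ⟨x, hx, hx0⟩ := Submodule.exists_mem_ne_zero_of_ne_bot hker
  have hAx : A *ᵥ x = 0 := hx
  obtain ⟨k, hk⟩ := Function.ne_iff.mp hx0
  have hk : x k ≠ 0 := hk
  have hH : (A + Matrix.single k k 1).IsHermitian := by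
    refine hA.add ?_
    simp [Matrix.IsHermitian, Matrix.conjTranspose_single]
  have hmul : ∀ v, (A + Matrix.single k k 1) *ᵥ v = A *ᵥ v + Pi.single k (v k) := by
    intro v
    rw [Matrix.add_mulVec, Matrix.single_mulVec]
    congr 1
    simp [Pi.single, Function.update]
  have hf : ∀ v, hform (A + Matrix.single k k 1) v = hform A v + ‖v k‖ ^ 2 := by
    intro v
    rw [hform, hmul, dotProduct_add, Complex.add_re, hform, dotProduct_single]
    congr 1
    simp only [Pi.star_apply, RCLike.star_def]
    rw [← Complex.normSq_eq_conj_mul_self, Complex.normSq_eq_norm_sq]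
    norm_cast
  refine ⟨k, hH, ?_⟩
  -- negative count does not grow
  have hq : negEigCount hH ≤ negEigCount hA := by
    obtain ⟨W, h1, h2⟩ := exists_negEigCount hH
    rw [← h1]
    refine le_negEigCount hA W fun v hv h => ?_
    have := h2 v hv h
    rw [hf] at this
    have := sq_nonneg ‖v k‖
    linarith
  -- positive count grows by at most one
  have hp : posEigCount hH ≤ posEigCount hA + 1 := by
    obtain ⟨W, h1, h2⟩ := exists_posEigCount hH
    let φ : W →ₗ[ℂ] ℂ := (LinearMap.proj k) ∘ₗ W.subtype
    have hd := LinearMap.finrank_range_add_finrank_ker φ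
    have hr : Module.finrank ℂ (LinearMap.range φ) ≤ 1 := by
      simpa using Submodule.finrank_le (LinearMap.range φ)
    have hm : Module.finrank ℂ ((LinearMap.ker φ).map W.subtype) =
        Module.finrank ℂ (LinearMap.ker φ) :=
      Submodule.finrank_map_subtype_eq W (LinearMap.ker φ)
    have := le_posEigCount hA ((LinearMap.ker φ).map W.subtype) (by
      rintro _ ⟨⟨v, hv⟩, hvk, rfl⟩ h
      have h3 := h2 v hv h
      have hvk : v k = 0 := hvk
      rw [hf, hvk] at h3
      simpa using h3)
    omega
  -- the rank grows
  have hrank : A.rank < (A + Matrix.single k k 1).rank := by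
    have hrn' : (A + Matrix.single k k 1).rank +
        Module.finrank ℂ (LinearMap.ker (A + Matrix.single k k 1).mulVecLin) =
          Fintype.card V := by
      have := LinearMap.finrank_range_add_finrank_ker (A + Matrix.single k k 1).mulVecLin
      simpa [Matrix.rank] using this
    have hlt' : LinearMap.ker (A + Matrix.single k k 1).mulVecLin <
        LinearMap.ker A.mulVecLin := by
      refine lt_of_le_of_ne ?_ ?_
      · intro v hv
        have hv : (A + Matrix.single k k 1) *ᵥ v = 0 := hv
        rw [hmul] at hv
        have h0 : star x ⬝ᵥ A *ᵥ v = 0 := by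
          rw [dotProduct_mulVec, ← hA.eq, ← star_mulVec, hAx]
          simp
        have h1 := congrArg (fun w => star x ⬝ᵥ w) hv
        simp only [dotProduct_add, h0, dotProduct_single, zero_add, dotProduct_zero] at h1
        have hvk : v k = 0 := by simpa [hk] using h1
        rw [hvk, Pi.single_zero, add_zero] at hv
        exact hv
      · intro h
        rw [← h] at hx
        have hx : (A + Matrix.single k k 1) *ᵥ x = 0 := hx
        rw [hmul, hAx, zero_add] at hx
        have := congrFun hx k
        simp at this
        exact hk this
    have := Submodule.finrank_lt_finrank_of_lt hlt'
    omega
  rw [← pos_add_neg hA, ← pos_add_neg hH] at hrank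
  omega

end counts

/-- The pair `(p, q)` is in the inertia set of `G`. -/
def InInertia {V : Type*} [Fintype V] [DecidableEq V] (G : SimpleGraph V) (p q : ℕ) : Prop :=
  ∃ A' : Matrix V V ℂ, ∃ hA' : A'.IsHermitian,
      (∀ i j : V, i ≠ j → (A' i j ≠ 0 ↔ G.Adj i j)) ∧
      posEigCount hA' = p ∧ negEigCount hA' = q

section inertia
variable {V : Type*} [Fintype V] [DecidableEq V] {G : SimpleGraph V}

lemma InInertia.swap {p q : ℕ} (h : InInertia G p q) : InInertia G q p := by
  obtain ⟨A, hA, hpat, rfl, rfl⟩ := h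
  exact ⟨-A, hA.neg, fun i j hij => by simpa using hpat i j hij,
    posEigCount_neg hA _, negEigCount_neg hA _⟩

lemma InInertia.step {p q : ℕ} (h : InInertia G p q) (hlt : p + q < Fintype.card V) :
    InInertia G (p + 1) q := by
  obtain ⟨A, hA, hpat, rfl, rfl⟩ := h
  obtain ⟨k, hH, h1, h2⟩ := step_counts hA hlt
  refine ⟨_, hH, fun i j hij => ?_, h1, h2⟩
  have : Matrix.single k k (1 : ℂ) i j = 0 :=
    Matrix.single_apply_of_ne _ _ _ _ _ (by rintro ⟨rfl, rfl⟩; exact hij rfl)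
  rw [Matrix.add_apply, this, add_zero]
  exact hpat i j hij

lemma InInertia.steps {p q : ℕ} (h : InInertia G p q) (s : ℕ)
    (hle : p + s + q ≤ Fintype.card V) : InInertia G (p + s) q := by
  induction s with
  | zero => exact h
  | succ s ih => exact (ih (by omega)).step (by omega)

end inertia

/-- Northeast Lemma: if `(p, q)` is in the inertia set of `G`, then so is
`(p + s, q + t)` for all nonnegative `s, t` with `(p + s) + (q + t) ≤ n`. -/
theorem northeast_lemma
    {V : Type*} [Fintype V] [DecidableEq V] (G : SimpleGraph V)
    (A : Matrix V V ℂ) (hA : A.IsHermitian)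
    (hpat : ∀ i j : V, i ≠ j → (A i j ≠ 0 ↔ G.Adj i j))
    (p q : ℕ) (hp : posEigCount hA = p) (hq : negEigCount hA = q)
    (s t : ℕ) (hst : (p + s) + (q + t) ≤ Fintype.card V) :
    ∃ A' : Matrix V V ℂ, ∃ hA' : A'.IsHermitian,
      (∀ i j : V, i ≠ j → (A' i j ≠ 0 ↔ G.Adj i j)) ∧
      posEigCount hA' = p + s ∧ negEigCount hA' = q + t := by
  have h0 : InInertia G p q := ⟨A, hA, hpat, hp, hq⟩
  exact ((h0.steps s (by omega)).swap.steps t (by omega)).swap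
end
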